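/- Let Σ₂ = {0,1}^ℕ with the shift map σ and the standard metric. For k ∈ ℕ₀ let X_k ⊆ Σ₂ be the set of sequences in which any two occurrences of the symbol 1 are separated by at least k+1 symbols 0, and let X_∞ ⊆ Σ₂ be the set of sequences with at most one symbol 1. Let N = {1/2^k : k ∈ ℕ₀} ∪ {0} ⊆ ℝ, endow N × Σ₂ with the max-metric, and define f(a, ξ) = (a, σ(ξ)). Let X = ({0} × X_∞) ∪ ⋃_{k≥0} ({1/2^k} × X_k). Then X is a closed f-invariant subset of N × Σ₂ and the restriction of f to X has shadowing. -/

import Mathlib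

/-!
Closedness: membership of `(a, ξ)` in `X` is equivalent to `a ∈ N` together with the inequalities
`4 * 2 ^ m ≤ a * 2 ^ n` for all `m < n` with `ξ m = ξ n = 1`, and each of these is a closed
condition because cylinder sets are open.

Shadowing: choose `M` with `(1/2) ^ M < ε` and `δ = (1/2) ^ (M + 2)`. The points `1 / 2 ^ k` with
`k ≤ M` are `δ`-isolated in `N`, so the first coordinate of a `δ`-pseudo-orbit either is constantly
such a point, or never exceeds `1 / 2 ^ M`. Since `X_∞ ⊆ X_k` and `X_j ⊆ X_k` for `k ≤ j`, in both
cases there is one `k ≤ M` such that all second coordinates lie in `X_k` and all first coordinates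
are `ε`-close to `1 / 2 ^ k`. It remains to shadow in the subshift of finite type `X_k`
(`gluing_mem_Xk`): reading off the zeroth symbols of a pseudo-orbit produces a point of `X_k`, as
the forbidden words have length at most `k + 2` and are seen inside a single point of the
pseudo-orbit.
-/


/-- The full one-sided shift space `Σ₂ = {0,1}^ℕ` (with `true` playing the role of `1`). -/
abbrev Sigma2 : Type := ℕ → Bool

/-- The shift map on `Σ₂`. -/
def shiftMap : Sigma2 → Sigma2 := fun ξ n => ξ (n + 1)

/- The standard metric on `Σ₂`: `d(ξ,η) = 2^{-min{n : ξ_n ≠ η_n}}`, `d(ξ,ξ) = 0`. -/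
open Classical in
noncomputable def shiftDist (ξ η : Sigma2) : ℝ :=
  if h : ξ = η then 0 else (1 / 2 : ℝ) ^ Nat.find (Function.ne_iff.mp h)

/-- The set of sequences with at most one occurrence of the symbol `1`. -/
def Xinf : Set Sigma2 := {ξ | ∀ m n : ℕ, ξ m = true → ξ n = true → m = n}
/-- The subshift of finite type `X_k`: any two occurrences of `1` are separated by at
least `k+1` zeros (their positions differ by at least `k+2`). -/
def Xk (k : ℕ) : Set Sigma2 :=
  {ξ | ∀ m n : ℕ, m < n → ξ m = true → ξ n = true → m + k + 2 ≤ n}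

/-- The space `X = ({0} × X_∞) ∪ ⋃ₖ ({1/2ᵏ} × X_k)` inside `ℝ × Σ₂`. -/
def bigX : Set (ℝ × Sigma2) :=
  (({(0 : ℝ)} : Set ℝ) ×ˢ Xinf) ∪ ⋃ k : ℕ, (({(1 / 2 ^ k : ℝ)} : Set ℝ) ×ˢ Xk k)

/-- The map `f(a, ξ) = (a, σ(ξ))`. -/
def prodMap : ℝ × Sigma2 → ℝ × Sigma2 := fun p => (p.1, shiftMap p.2)

/-- The max-metric on `ℝ × Σ₂`. -/
noncomputable def prodDist (p q : ℝ × Sigma2) : ℝ :=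
  max |p.1 - q.1| (shiftDist p.2 q.2)

theorem eq_of_shiftDist_lt {ξ η : Sigma2} {m : ℕ} (h : shiftDist ξ η < (1 / 2 : ℝ) ^ m)
    {i : ℕ} (hi : i ≤ m) : ξ i = η i := by
  classical
  unfold shiftDist at h
  split_ifs at h with h0
  · rw [h0]
  · by_contra hne
    have h1 := Nat.find_min' (Function.ne_iff.mp h0) hne
    have h2 : (1 / 2 : ℝ) ^ m ≤ (1 / 2 : ℝ) ^ Nat.find (Function.ne_iff.mp h0) :=
      pow_le_pow_of_le_one (by norm_num) (by norm_num) (h1.trans hi)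
    exact absurd h (not_lt.mpr (by convert h2))

theorem shiftDist_le {ξ η : Sigma2} {m : ℕ} (h : ∀ i < m, ξ i = η i) :
    shiftDist ξ η ≤ (1 / 2 : ℝ) ^ m := by
  classical
  unfold shiftDist
  split_ifs with h0
  · positivity
  · apply pow_le_pow_of_le_one (by norm_num) (by norm_num)
    rw [Nat.le_find_iff]
    intro i hi
    simpa using h i hi

theorem Xk_antitone {j k : ℕ} (h : k ≤ j) : Xk j ⊆ Xk k := by
  intro ξ hξ m n hmn hm hn
  have := hξ m n hmn hm hn
  omega

theorem Xinf_subset_Xk (k : ℕ) : Xinf ⊆ Xk k := by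
  intro ξ hξ m n hmn hm hn
  have := hξ m n hm hn
  omega

theorem mem_bigX_iff {p : ℝ × Sigma2} :
    p ∈ bigX ↔ (p.1 = 0 ∧ p.2 ∈ Xinf) ∨ ∃ k : ℕ, p.1 = 1 / 2 ^ k ∧ p.2 ∈ Xk k := by
  simp [bigX, Set.mem_prod]

/-- The gap condition defining `X_k`, expressed through `a = 1 / 2 ^ k`. It also rules out adjacent
symbols `1`, since then it would force `2 ≤ a`. -/
theorem mem_Xk_iff {k : ℕ} {ξ : Sigma2} : ξ ∈ Xk k ↔
    ∀ m n : ℕ, m < n → ξ m = true → ξ n = true → (4 : ℝ) * 2 ^ m ≤ 1 / 2 ^ k * 2 ^ n := by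
  have key : ∀ m n : ℕ, (4 : ℝ) * 2 ^ m ≤ 1 / 2 ^ k * 2 ^ n ↔ m + k + 2 ≤ n := by
    intro m n
    rw [← pow_le_pow_iff_right₀ (a := (2 : ℝ)) (by norm_num), div_mul_eq_mul_div, one_mul,
      le_div_iff₀ (by positivity)]
    ring_nf
  simp only [Xk, Set.mem_ofPred_eq, key]

theorem mem_Xinf_iff {ξ : Sigma2} : ξ ∈ Xinf ↔
    ∀ m n : ℕ, m < n → ξ m = true → ξ n = true → (4 : ℝ) * 2 ^ m ≤ 0 * 2 ^ n := by
  have key : ∀ m n : ℕ, ¬ (4 : ℝ) * 2 ^ m ≤ 0 * 2 ^ n := by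
    intro m n
    rw [zero_mul, not_le]
    positivity
  simp only [Xinf, Set.mem_ofPred_eq, key]
  constructor
  · intro h m n hmn hm hn
    exact hmn.ne (h m n hm hn)
  · intro h m n hm hn
    rcases lt_trichotomy m n with hmn | hmn | hmn
    · exact (h m n hmn hm hn).elim
    · exact hmn
    · exact (h n m hmn hn hm).elim

theorem isClosed_bigX : IsClosed bigX := by
  have hN : IsClosed (insert (0 : ℝ) (Set.range fun k : ℕ => (1 / 2 : ℝ) ^ k)) :=
    (tendsto_pow_atTop_nhds_zero_of_lt_one (by norm_num)
      (by norm_num : (1 / 2 : ℝ) < 1)).isCompact_insert_range.isClosed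
  have hset : bigX = {p : ℝ × Sigma2 |
      p.1 ∈ insert (0 : ℝ) (Set.range fun k : ℕ => (1 / 2 : ℝ) ^ k)} ∩
      {p : ℝ × Sigma2 | ∀ m n : ℕ, m < n → p.2 m = true → p.2 n = true →
        (4 : ℝ) * 2 ^ m ≤ p.1 * 2 ^ n} := by
    ext ⟨a, ξ⟩
    rw [mem_bigX_iff]
    simp only [Set.mem_inter_iff, Set.mem_ofPred_eq, Set.mem_insert_iff, Set.mem_range,
      one_div_pow]
    constructor
    · rintro (⟨rfl, h⟩ | ⟨k, rfl, h⟩)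
      · exact ⟨Or.inl rfl, mem_Xinf_iff.mp h⟩
      · exact ⟨Or.inr ⟨k, rfl⟩, mem_Xk_iff.mp h⟩
    · rintro ⟨rfl | ⟨k, rfl⟩, h⟩
      · exact Or.inl ⟨rfl, mem_Xinf_iff.mpr h⟩
      · exact Or.inr ⟨k, rfl, mem_Xk_iff.mpr h⟩
  have hcyl : ∀ m : ℕ, IsOpen {p : ℝ × Sigma2 | p.2 m = true} := by
    intro m
    have hc : Continuous fun p : ℝ × Sigma2 => p.2 m :=
      (continuous_apply m).comp continuous_snd
    exact (isOpen_discrete ({true} : Set Bool)).preimage hc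
  rw [hset]
  refine (hN.preimage continuous_fst).inter ?_
  simp only [Set.ofPred_forall]
  refine isClosed_iInter fun m => isClosed_iInter fun n => isClosed_iInter fun _ => ?_
  exact isClosed_imp (hcyl m) (isClosed_imp (hcyl n)
    (isClosed_le continuous_const (continuous_fst.mul continuous_const)))

theorem mapsTo_bigX : Set.MapsTo prodMap bigX bigX := by
  rintro ⟨a, ξ⟩ h
  rw [mem_bigX_iff] at h ⊢
  rcases h with ⟨h0, h⟩ | ⟨k, h0, h⟩
  · refine Or.inl ⟨h0, fun m n hm hn => ?_⟩
    have := h (m + 1) (n + 1) hm hn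
    omega
  · refine Or.inr ⟨k, h0, fun m n hmn hm hn => ?_⟩
    have := h (m + 1) (n + 1) (by omega) hm hn
    omega

/-- The points `1 / 2 ^ k` with `k ≤ M` are `(1/2) ^ (M + 2)`-isolated in `N`. -/
theorem eq_of_abs_sub_lt {M k : ℕ} (hk : k ≤ M) {a : ℝ}
    (ha : a = 0 ∨ ∃ j : ℕ, a = 1 / 2 ^ j)
    (h : |(1 / 2 ^ k : ℝ) - a| < (1 / 2) ^ (M + 2)) : a = 1 / 2 ^ k := by
  have anti : ∀ {i j : ℕ}, i ≤ j → (1 / 2 : ℝ) ^ j ≤ (1 / 2) ^ i := fun hij =>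
    pow_le_pow_of_le_one (by norm_num) (by norm_num) hij
  have hpos : ∀ i : ℕ, (0 : ℝ) < (1 / 2) ^ i := fun i => by positivity
  simp only [← one_div_pow] at *
  have hM := anti (show k + 2 ≤ M + 2 by omega)
  have hk2 : (1 / 2 : ℝ) ^ (k + 2) = (1 / 2) ^ k / 4 := by ring
  have hk1 : (1 / 2 : ℝ) ^ (k + 1) = (1 / 2) ^ k / 2 := by ring
  have hk0 := hpos k
  rw [abs_lt] at h
  rcases ha with rfl | ⟨j, rfl⟩
  · linarith [h.2]
  · rcases lt_trichotomy j k with hjk | rfl | hjk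
    · have h1 := anti (show j + 1 ≤ k by omega)
      have hj1 : (1 / 2 : ℝ) ^ (j + 1) = (1 / 2) ^ j / 2 := by ring
      linarith [h.1]
    · rfl
    · have h1 := anti (show k + 1 ≤ j by omega)
      linarith [h.2]

theorem prodMap_iterate (a : ℝ) (ζ : Sigma2) (n : ℕ) :
    prodMap^[n] (a, ζ) = (a, fun i => ζ (n + i)) := by
  induction n with
  | zero => simp
  | succ n ih =>
    rw [Function.iterate_succ_apply', ih]
    simp only [prodMap, Prod.mk.injEq, true_and]
    funext i
    simp only [shiftMap]
    congr 1
    omega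

/-- Along a pseudo-orbit, each point predicts the zeroth symbols of the following points. -/
theorem gluing_apply {ξ : ℕ → Sigma2} {L : ℕ}
    (hξ : ∀ n, ∀ i < L, ξ n (i + 1) = ξ (n + 1) i) :
    ∀ i ≤ L, ∀ n, ξ (n + i) 0 = ξ n i := by
  intro i
  induction i with
  | zero => intro _ n; rfl
  | succ i ih =>
    intro hi n
    rw [hξ n i (by omega), ← ih (by omega) (n + 1)]
    congr 1
    omega

theorem gluing_mem_Xk {ξ : ℕ → Sigma2} {L k : ℕ} (hk : k + 1 ≤ L)
    (hmem : ∀ n, ξ n ∈ Xk k) (hξ : ∀ n, ∀ i < L, ξ n (i + 1) = ξ (n + 1) i) :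
    (fun n => ξ n 0) ∈ Xk k := by
  intro m n hmn hm hn
  by_contra hlt
  obtain ⟨d, rfl⟩ := Nat.exists_eq_add_of_le hmn.le
  have hd : ξ m d = true := by
    rw [← gluing_apply hξ d (by omega) m]
    exact hn
  have := hmem m 0 d (by omega) hm hd
  omega

/-- `X` is a closed `f`-invariant subset of `N × Σ₂` and the
restriction of `f(a,ξ) = (a,σ(ξ))` to `X` has shadowing (with respect to the
max-metric). -/
theorem bigX_closed_invariant_shadowing :
    IsClosed bigX ∧ Set.MapsTo prodMap bigX bigX ∧
    ∀ ε : ℝ, 0 < ε → ∃ δ : ℝ, 0 < δ ∧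
      ∀ x : ℕ → ℝ × Sigma2, (∀ n, x n ∈ bigX) →
        (∀ n, prodDist (prodMap (x n)) (x (n + 1)) < δ) →
        ∃ z ∈ bigX, ∀ n, prodDist (prodMap^[n] z) (x n) < ε := by
  refine ⟨isClosed_bigX, mapsTo_bigX, fun ε hε => ?_⟩
  obtain ⟨M, hM⟩ := exists_pow_lt_of_lt_one hε (by norm_num : (1 / 2 : ℝ) < 1)
  refine ⟨(1 / 2) ^ (M + 2), by positivity, fun x hx hpo => ?_⟩
  have hfst : ∀ n, |(x n).1 - (x (n + 1)).1| < (1 / 2 : ℝ) ^ (M + 2) := fun n =>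
    (le_max_left _ _).trans_lt (hpo n)
  have hsnd : ∀ n, ∀ i < M + 2, (x n).2 (i + 1) = (x (n + 1)).2 i := fun n i hi =>
    eq_of_shiftDist_lt ((le_max_right _ _).trans_lt (hpo n)) hi.le
  have hN : ∀ n, (x n).1 = 0 ∨ ∃ j : ℕ, (x n).1 = 1 / 2 ^ j := fun n =>
    (mem_bigX_iff.mp (hx n)).imp And.left fun ⟨j, h⟩ => ⟨j, h.1⟩
  have hconst : ∀ k ≤ M, ∀ n, (x n).1 = 1 / 2 ^ k ↔ (x 0).1 = 1 / 2 ^ k := by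
    intro k hk n
    induction n with
    | zero => rfl
    | succ n ih =>
      rw [← ih]
      constructor
      · intro h
        refine eq_of_abs_sub_lt hk (hN n) ?_
        rw [← h, abs_sub_comm]
        exact hfst n
      · intro h
        refine eq_of_abs_sub_lt hk (hN (n + 1)) ?_
        rw [← h]
        exact hfst n
  obtain ⟨k, hkM, hmem, hclose⟩ : ∃ k ≤ M, (∀ n, (x n).2 ∈ Xk k) ∧
      ∀ n, |(1 / 2 ^ k : ℝ) - (x n).1| < ε := by
    by_cases h0 : ∃ k ≤ M, (x 0).1 = 1 / 2 ^ k
    · obtain ⟨k, hk, h0⟩ := h0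
      refine ⟨k, hk, fun n => ?_, fun n => ?_⟩
      · have hn := (hconst k hk n).mpr h0
        rcases mem_bigX_iff.mp (hx n) with ⟨_, h⟩ | ⟨j, hj, h⟩
        · exact Xinf_subset_Xk k h
        · rw [hn] at hj
          have hjk : k = j := by simpa using hj
          exact hjk ▸ h
      · rw [(hconst k hk n).mpr h0, sub_self, abs_zero]
        exact hε
    · have htail : ∀ n j : ℕ, (x n).1 = 1 / 2 ^ j → M ≤ j := by
        intro n j hj
        by_contra hlt
        exact h0 ⟨j, by omega, (hconst j (by omega) n).mp hj⟩
      refine ⟨M, le_rfl, fun n => ?_, fun n => ?_⟩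
      · rcases mem_bigX_iff.mp (hx n) with ⟨_, h⟩ | ⟨j, hj, h⟩
        · exact Xinf_subset_Xk M h
        · exact Xk_antitone (htail n j hj) h
      · have hbound : 0 ≤ (x n).1 ∧ (x n).1 ≤ (1 / 2 : ℝ) ^ M := by
          rcases hN n with h | ⟨j, h⟩
          · rw [h]
            exact ⟨le_rfl, by positivity⟩
          · have hle : (1 / 2 : ℝ) ^ j ≤ (1 / 2) ^ M :=
              pow_le_pow_of_le_one (by norm_num) (by norm_num) (htail n j h)
            rw [h, ← one_div_pow]
            exact ⟨by positivity, hle⟩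
        rw [← one_div_pow, abs_lt]
        constructor <;> linarith [hbound.1, hbound.2]
  refine ⟨(1 / 2 ^ k, fun n => (x n).2 0), mem_bigX_iff.mpr (Or.inr ⟨k, rfl, ?_⟩), fun n => ?_⟩
  · exact gluing_mem_Xk (ξ := fun n => (x n).2) (L := M + 2) (by omega) hmem hsnd
  · rw [prodMap_iterate]
    refine max_lt (hclose n) (lt_of_le_of_lt (shiftDist_le fun i hi => ?_) hM)
    exact gluing_apply (ξ := fun n => (x n).2) hsnd i (by omega) n
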